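/- Let Θ_1, …, Θ_m be r×r generator matrices (nonnegative off-diagonal entries, zero row sums) that share a common strictly positive left null vector w (w Θ_ℓ = 0 for all ℓ, with w𝟙 = 1), let c_1, …, c_m > 0 and set N_ℓ = c_ℓ(c_ℓ I − Θ_ℓ)^{−1}. Let P̂ be an m×m stochastic matrix with stationary probability vector π̂. Then w N_ℓ = w for every ℓ, the row vector π̂ ⊗ w is a stationary probability vector of the stochastic matrix N(P̂ ⊗ I_r), where N is block-diagonal with blocks N_1,…,N_m, and (π̂ ⊗ w)(I − N) = 0; consequently the lower-bound correction term (π̂ ⊗ w)(I − N) log v̄ vanishes for any choice of the vector log v̄. -/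

import Mathlib

/-!
Since `w * (c * I - Θ) = c * w` for a left null vector `w` of `Θ`, the matrix `c * (c * I - Θ)⁻¹`
fixes `w`. A vector `π ⊗ w` is then fixed by the block-diagonal matrix of these resolvents, because
each block acts on a multiple of `w`, and by `P ⊗ I` as soon as `π` is fixed by `P`. For generator
matrices the inverse exists because `c * I - Θ` is strictly diagonally dominant.
-/

open Matrix
open scoped Kronecker

/-- Block-diagonal matrix with `m` diagonal blocks of size `r × r`. -/
def blockDiag {m r : ℕ} (M : Fin m → Matrix (Fin r) (Fin r) ℝ) :
    Matrix (Fin m × Fin r) (Fin m × Fin r) ℝ :=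
  Matrix.of fun p q => if p.1 = q.1 then M p.1 p.2 q.2 else 0

section KroneckerVec

variable {R l m n p : Type*}

/-- The Kronecker product `u ⊗ v` of two vectors, indexed by pairs in the same order as the rows
and columns of `A ⊗ₖ B`. -/
def kroneckerVec [Mul R] (u : l → R) (v : m → R) : l × m → R :=
  fun q => u q.1 * v q.2

theorem sum_kroneckerVec [NonUnitalNonAssocSemiring R] [Fintype l] [Fintype m]
    (u : l → R) (v : m → R) : ∑ q, kroneckerVec u v q = (∑ i, u i) * ∑ j, v j := by
  simp only [kroneckerVec, Fintype.sum_prod_type, Fintype.sum_mul_sum]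

theorem kroneckerVec_vecMul_kronecker [NonUnitalCommSemiring R] [Fintype l] [Fintype m]
    (u : l → R) (v : m → R) (A : Matrix l n R) (B : Matrix m p R) :
    kroneckerVec u v ᵥ* (A ⊗ₖ B) = kroneckerVec (u ᵥ* A) (v ᵥ* B) := by
  ext ⟨j, k⟩
  simp only [kroneckerVec, vecMul, dotProduct, kronecker_apply, Fintype.sum_prod_type,
    Fintype.sum_mul_sum, mul_mul_mul_comm]

theorem kroneckerVec_vecMul_reindex_blockDiagonal [NonUnitalSemiring R] [Fintype l]
    [DecidableEq l] [Fintype m] (u : l → R) (v : m → R) (M : l → Matrix m n R) :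
    kroneckerVec u v ᵥ* reindex (.prodComm m l) (.prodComm n l) (blockDiagonal M) =
      fun q => u q.1 * (v ᵥ* M q.1) q.2 := by
  ext ⟨k, j⟩
  simp [kroneckerVec, vecMul, dotProduct, Fintype.sum_prod_type_right, blockDiagonal_apply,
    Finset.mul_sum, mul_assoc]

end KroneckerVec

theorem blockDiag_eq_reindex_blockDiagonal {m r : ℕ} (M : Fin m → Matrix (Fin r) (Fin r) ℝ) :
    _root_.blockDiag M =
      reindex (.prodComm (Fin r) (Fin m)) (.prodComm (Fin r) (Fin m)) (blockDiagonal M) :=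
  rfl

section NormalizedResolvent

variable {R n : Type*} [Fintype n] [DecidableEq n]

/-- The resolvent `c * (c * I - A)⁻¹`, normalized so that it fixes the null vectors of `A`. As
`Matrix.inv` is zero on singular matrices, it is meaningful only if `c * I - A` is invertible. -/
noncomputable def normalizedResolvent [CommRing R] (c : R) (A : Matrix n n R) : Matrix n n R :=
  c • (c • (1 : Matrix n n R) - A)⁻¹

theorem vecMul_smul_inv_of_vecMul_eq_smul [CommRing R] {B : Matrix n n R} (hB : IsUnit B)
    {c : R} {v : n → R} (hv : v ᵥ* B = c • v) : v ᵥ* (c • B⁻¹) = v := by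
  calc v ᵥ* (c • B⁻¹) = (v ᵥ* B) ᵥ* B⁻¹ := by rw [vecMul_smul, ← smul_vecMul, hv]
    _ = v := by
      rw [vecMul_vecMul, mul_nonsing_inv B ((isUnit_iff_isUnit_det B).mp hB), vecMul_one]

theorem vecMul_normalizedResolvent [CommRing R] {c : R} {A : Matrix n n R}
    (hA : IsUnit (c • (1 : Matrix n n R) - A)) {v : n → R} (hv : v ᵥ* A = 0) :
    v ᵥ* normalizedResolvent c A = v :=
  vecMul_smul_inv_of_vecMul_eq_smul hA <| by
    rw [vecMul_sub, vecMul_smul, vecMul_one, hv, sub_zero]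

theorem isUnit_smul_one_sub_of_sum_row_lt {A : Matrix n n ℝ} {c : ℝ}
    (hoff : ∀ i j, i ≠ j → 0 ≤ A i j) (hrow : ∀ i, ∑ j, A i j < c) :
    IsUnit (c • (1 : Matrix n n ℝ) - A) := by
  refine (isUnit_iff_isUnit_det _).mpr (det_ne_zero_of_sum_row_lt_diag fun i => ?_).isUnit
  calc ∑ j ∈ Finset.univ.erase i, ‖(c • (1 : Matrix n n ℝ) - A) i j‖
      = ∑ j ∈ Finset.univ.erase i, A i j := by
        refine Finset.sum_congr rfl fun j hj => ?_
        have hij : i ≠ j := (Finset.ne_of_mem_erase hj).symm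
        simp [hij, abs_of_nonneg (hoff i j hij)]
    _ = ∑ j, A i j - A i i := Finset.sum_erase_eq_sub (Finset.mem_univ i)
    _ < c - A i i := sub_lt_sub_right (hrow i) _
    _ ≤ ‖(c • (1 : Matrix n n ℝ) - A) i i‖ := by simpa using le_abs_self (c - A i i)

end NormalizedResolvent

theorem common_left_null_vector_lower_bound_tight_general {R ι κ : Type*} [CommRing R]
    [PartialOrder R] [IsOrderedRing R] [Fintype ι] [DecidableEq ι] [Fintype κ] [DecidableEq κ]
    {Θ : ι → Matrix κ κ R} {c : ι → R} (hΘ : ∀ k, IsUnit (c k • (1 : Matrix κ κ R) - Θ k))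
    {w : κ → R} (hw : ∀ i, 0 ≤ w i) (hw_null : ∀ k, w ᵥ* Θ k = 0) (hw_sum : ∑ i, w i = 1)
    {P : Matrix ι ι R} {π : ι → R} (hπ : ∀ k, 0 ≤ π k) (hπ_sum : ∑ k, π k = 1)
    (hπ_stat : π ᵥ* P = π) :
    let N := reindex (.prodComm κ ι) (.prodComm κ ι)
      (blockDiagonal fun k => normalizedResolvent (c k) (Θ k))
    (∀ k, w ᵥ* normalizedResolvent (c k) (Θ k) = w) ∧
    (∀ q, 0 ≤ kroneckerVec π w q) ∧
    (∑ q, kroneckerVec π w q = 1) ∧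
    (kroneckerVec π w ᵥ* (N * (P ⊗ₖ (1 : Matrix κ κ R))) = kroneckerVec π w) ∧
    (kroneckerVec π w ᵥ* (1 - N) = 0) ∧
    (∀ lv : ι × κ → R, (kroneckerVec π w ᵥ* (1 - N)) ⬝ᵥ lv = 0) := by
  intro N
  have hw_fixed : ∀ k, w ᵥ* normalizedResolvent (c k) (Θ k) = w :=
    fun k => vecMul_normalizedResolvent (hΘ k) (hw_null k)
  have hN : kroneckerVec π w ᵥ* N = kroneckerVec π w := by
    simp only [N, kroneckerVec_vecMul_reindex_blockDiagonal, hw_fixed]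
    rfl
  have hN_sub : kroneckerVec π w ᵥ* (1 - N) = 0 := by
    rw [vecMul_sub, vecMul_one, hN, sub_self]
  refine ⟨hw_fixed, fun q => mul_nonneg (hπ q.1) (hw q.2), ?_, ?_, hN_sub, fun lv => ?_⟩
  · rw [sum_kroneckerVec, hπ_sum, hw_sum, one_mul]
  · rw [← vecMul_vecMul, hN, kroneckerVec_vecMul_kronecker, hπ_stat, vecMul_one]
  · rw [hN_sub, zero_dotProduct]

/-- if the generator matrices `Θ_ℓ` share a common strictly positive left
null vector `w` (with `w 𝟙 = 1`) and `N_ℓ = c_ℓ (c_ℓ I − Θ_ℓ)⁻¹`, then `w N_ℓ = w` for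
every `ℓ`; for any stochastic `P̂` with stationary probability vector `π̂`, the row vector
`π̂ ⊗ w` is a stationary probability vector of `N (P̂ ⊗ I_r)` and
`(π̂ ⊗ w)(I − N) = 0`, so the lower-bound correction `(π̂ ⊗ w)(I − N) log v̄` vanishes. -/
theorem common_left_null_vector_lower_bound_tight {m r : ℕ}
    (Th : Fin m → Matrix (Fin r) (Fin r) ℝ)
    (hoff : ∀ ℓ i j, i ≠ j → 0 ≤ Th ℓ i j) (hrow : ∀ ℓ i, ∑ j, Th ℓ i j = 0)
    (w : Fin r → ℝ) (hw : ∀ i, 0 < w i) (hwnull : ∀ ℓ, w ᵥ* Th ℓ = 0)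
    (hwsum : ∑ i, w i = 1)
    (c : Fin m → ℝ) (hc : ∀ ℓ, 0 < c ℓ)
    (Phat : Matrix (Fin m) (Fin m) ℝ)
    (hP0 : ∀ ℓ ℓ', 0 ≤ Phat ℓ ℓ') (hP1 : ∀ ℓ, ∑ ℓ', Phat ℓ ℓ' = 1)
    (pihat : Fin m → ℝ) (hpi0 : ∀ ℓ, 0 ≤ pihat ℓ) (hpi1 : ∑ ℓ, pihat ℓ = 1)
    (hpi_stat : pihat ᵥ* Phat = pihat) :
    (∀ ℓ, w ᵥ* (c ℓ • (c ℓ • (1 : Matrix (Fin r) (Fin r) ℝ) - Th ℓ)⁻¹) = w) ∧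
    (∀ p : Fin m × Fin r, 0 ≤ pihat p.1 * w p.2) ∧
    (∑ p : Fin m × Fin r, pihat p.1 * w p.2 = 1) ∧
    ((fun p : Fin m × Fin r => pihat p.1 * w p.2) ᵥ*
        (blockDiag (fun ℓ => c ℓ • (c ℓ • (1 : Matrix (Fin r) (Fin r) ℝ) - Th ℓ)⁻¹)
          * (Phat ⊗ₖ (1 : Matrix (Fin r) (Fin r) ℝ)))
      = fun p : Fin m × Fin r => pihat p.1 * w p.2) ∧
    ((fun p : Fin m × Fin r => pihat p.1 * w p.2) ᵥ*
        ((1 : Matrix (Fin m × Fin r) (Fin m × Fin r) ℝ)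
          - blockDiag (fun ℓ => c ℓ • (c ℓ • (1 : Matrix (Fin r) (Fin r) ℝ) - Th ℓ)⁻¹))
      = 0) ∧
    (∀ lv : Fin m × Fin r → ℝ,
      ∑ p : Fin m × Fin r,
        ((fun q : Fin m × Fin r => pihat q.1 * w q.2) ᵥ*
          ((1 : Matrix (Fin m × Fin r) (Fin m × Fin r) ℝ)
            - blockDiag (fun ℓ => c ℓ • (c ℓ • (1 : Matrix (Fin r) (Fin r) ℝ) - Th ℓ)⁻¹))) p
        * lv p = 0) := by
  simp only [blockDiag_eq_reindex_blockDiagonal]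
  exact common_left_null_vector_lower_bound_tight_general
    (fun ℓ => isUnit_smul_one_sub_of_sum_row_lt (hoff ℓ) fun i => (hrow ℓ i).trans_lt (hc ℓ))
    (fun i => (hw i).le) hwnull hwsum hpi0 hpi1 hpi_stat
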